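/- arXiv:math/9412212 — 2 statements merged into one kernel-verified Lean document; each statement's English description precedes it below -/
import Mathlib

section
/- Let S be a compact Hausdorff space and let T : C(S) → C(S) be a weakly compact operator with representing kernel (μ_s)_{s∈S}. Then for every t ∈ S the function s ↦ μ_s({t}) is continuous on S. -/
/-!
Fix `t` and, for each open neighbourhood `U` of `t`, choose by Urysohn's lemma a bump function
`f U : S → [0, 1]` with `f U t = 1` that vanishes off `U`. Outer regularity of `|μ_s|` at `{t}`
gives `T (f U) s = ∫ f U dμ_s → μ_s {t}` for every `s` as `U` shrinks to `t`. All the functions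
`T (f U)` lie in a weakly compact set, so along an ultrafilter they converge weakly to some
`g ∈ C(S)`. Point evaluations are weakly continuous, hence `g s = μ_s {t}` for all `s`.
-/

open MeasureTheory Topology

/-- The integral of a real function against a signed measure, defined via the Jordan
decomposition. -/
noncomputable def SignedMeasure.integral {S : Type*} [MeasurableSpace S]
    (μ : SignedMeasure S) (f : S → ℝ) : ℝ :=
  ∫ x, f x ∂μ.toJordanDecomposition.posPart - ∫ x, f x ∂μ.toJordanDecomposition.negPart

/-- A bounded linear operator is weakly compact if the image of the closed unit ball is
relatively compact in the weak topology. -/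
def IsWeaklyCompactOperator {E F : Type*} [NormedAddCommGroup E] [NormedSpace ℝ E]
    [NormedAddCommGroup F] [NormedSpace ℝ F] (T : E →L[ℝ] F) : Prop :=
  IsCompact (closure ((toWeakSpace ℝ F) '' (T '' Metric.closedBall 0 1)))

/-- The integral of a bump function at `t` supported in `V` exceeds the mass of the atom `{t}`
by at most the mass of `V \ {t}`. -/
lemma abs_integral_sub_atom_le {S : Type*} [TopologicalSpace S]
    [CompactSpace S] [T2Space S] [MeasurableSpace S] [BorelSpace S]
    (m : Measure S) [IsFiniteMeasure m] (t : S) (V : Set S) (hV : MeasurableSet V)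
    (f : C(S, ℝ)) (h01 : ∀ x, f x ∈ Set.Icc (0 : ℝ) 1) (ht : f t = 1)
    (h0 : ∀ x ∉ V, f x = 0) :
    |∫ x, f x ∂m - m.real {t}| ≤ m.real (V \ {t}) := by
  have hint : Integrable f m := f.continuous.integrable_of_hasCompactSupport
    (HasCompactSupport.of_compactSpace _)
  have hd : MeasurableSet (V \ {t}) := hV.diff (measurableSet_singleton t)
  have hi1 : Integrable (Set.indicator {t} (fun _ => (1 : ℝ))) m :=
    (integrable_const 1).indicator (measurableSet_singleton t)
  have e1 : m.real {t} = ∫ x, Set.indicator {t} (fun _ => (1 : ℝ)) x ∂m := by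
    rw [integral_indicator (measurableSet_singleton t)]; simp [measureReal_def]
  have e2 : m.real (V \ {t}) = ∫ x, Set.indicator (V \ {t}) (fun _ => (1 : ℝ)) x ∂m := by
    rw [integral_indicator hd]; simp
  rw [e1, e2, ← integral_sub hint hi1]
  refine (abs_integral_le_integral_abs).trans (integral_mono (hint.sub hi1).abs
    ((integrable_const 1).indicator hd) fun x => ?_)
  obtain ⟨ha, hb⟩ := h01 x
  by_cases hx : x = t
  · subst hx; simp [ht]
  · by_cases hxV : x ∈ V
    · simp [hx, hxV, abs_of_nonneg ha, hb]
    · simp [hx, hxV, h0 x hxV]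

lemma signedMeasure_singleton_eq {S : Type*} [MeasurableSpace S] [MeasurableSingletonClass S]
    (μ : SignedMeasure S) (t : S) :
    μ {t} = μ.toJordanDecomposition.posPart.real {t} -
      μ.toJordanDecomposition.negPart.real {t} := by
  conv_lhs => rw [← μ.toSignedMeasure_toJordanDecomposition]
  rw [JordanDecomposition.toSignedMeasure, sub_apply,
    Measure.toSignedMeasure_apply_measurable (measurableSet_singleton t),
    Measure.toSignedMeasure_apply_measurable (measurableSet_singleton t)]

/-- By outer regularity at `{t}`, integrals of bump functions supported in a small neighbourhood
of `t` are close to the mass of the atom. -/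
lemma exists_openNhds_integral_close {S : Type*} [TopologicalSpace S]
    [CompactSpace S] [T2Space S] [MeasurableSpace S] [BorelSpace S]
    (μ : SignedMeasure S) (hreg : μ.totalVariation.Regular) (t : S) {ε : ℝ} (hε : 0 < ε) :
    ∃ V : TopologicalSpace.OpenNhdsOf t, ∀ f : C(S, ℝ), (∀ x, f x ∈ Set.Icc (0 : ℝ) 1) →
      f t = 1 → (∀ x ∉ V, f x = 0) → |SignedMeasure.integral μ f - μ {t}| < ε := by
  have hfin : IsFiniteMeasure μ.totalVariation := by
    unfold SignedMeasure.totalVariation; infer_instance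
  obtain ⟨V, htV, hVo, hV⟩ := Set.exists_isOpen_lt_add (μ := μ.totalVariation) {t}
    (measure_ne_top _ _) (ENNReal.ofReal_pos.2 hε).ne'
  have htV' : t ∈ V := htV rfl
  refine ⟨⟨⟨V, hVo⟩, htV'⟩, fun f h01 ht h0 => ?_⟩
  have h0' : ∀ x ∉ V, f x = 0 := h0
  have hp := abs_integral_sub_atom_le μ.toJordanDecomposition.posPart t V hVo.measurableSet
    f h01 ht h0'
  have hn := abs_integral_sub_atom_le μ.toJordanDecomposition.negPart t V hVo.measurableSet
    f h01 ht h0'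
  have hlt : μ.totalVariation.real (V \ {t}) < ε := by
    rw [measureReal_sdiff htV (measurableSet_singleton t), sub_lt_iff_lt_add', measureReal_def,
      measureReal_def, ← ENNReal.toReal_ofReal hε.le,
      ← ENNReal.toReal_add (measure_ne_top _ _) ENNReal.ofReal_ne_top]
    exact ENNReal.toReal_strict_mono (by finiteness) hV
  have hsum : μ.totalVariation.real (V \ {t}) =
      μ.toJordanDecomposition.posPart.real (V \ {t}) +
      μ.toJordanDecomposition.negPart.real (V \ {t}) := by
    rw [SignedMeasure.totalVariation, measureReal_add_apply]
  rw [signedMeasure_singleton_eq, SignedMeasure.integral]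
  rw [abs_le] at hp hn
  rw [abs_lt]
  constructor <;> linarith [hp.1, hp.2, hn.1, hn.2]

theorem kernel_atom_continuous_of_weaklyCompact {S : Type*} [TopologicalSpace S]
    [CompactSpace S] [T2Space S] [MeasurableSpace S] [BorelSpace S]
    (T : C(S, ℝ) →L[ℝ] C(S, ℝ)) (hT : IsWeaklyCompactOperator T)
    (μ : S → SignedMeasure S)
    (hreg : ∀ s, (μ s).totalVariation.Regular)
    (hker : ∀ (f : C(S, ℝ)) (s : S), T f s = SignedMeasure.integral (μ s) f) :
    ∀ t : S, Continuous fun s => μ s {t} := by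
  intro t
  have hbump : ∀ U : TopologicalSpace.OpenNhdsOf t, ∃ f : C(S, ℝ),
      (∀ x, f x ∈ Set.Icc (0 : ℝ) 1) ∧ f t = 1 ∧ ∀ x ∉ U, f x = 0 := by
    intro U
    have hd : Disjoint ((U : Set S)ᶜ) {t} := by
      rw [Set.disjoint_singleton_right]; exact fun h => h U.mem
    obtain ⟨f, h0, h1, h01⟩ := exists_continuous_zero_one_of_isClosed
      U.isOpen.isClosed_compl isClosed_singleton hd
    exact ⟨f, h01, h1 rfl, fun x hx => h0 hx⟩
  choose f h01 ht h0 using hbump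
  have hlim : ∀ s, Filter.Tendsto (fun U => T (f U) s) Filter.atBot (𝓝 (μ s {t})) := by
    intro s
    rw [Metric.tendsto_nhds]
    intro ε hε
    obtain ⟨V, hV⟩ := exists_openNhds_integral_close (μ s) (hreg s) t hε
    filter_upwards [Filter.eventually_le_atBot V] with U hU
    rw [hker, Real.dist_eq]
    exact hV _ (h01 U) (ht U) fun x hx => h0 U x fun h => hx (hU h)
  let F := Ultrafilter.of (Filter.atBot : Filter (TopologicalSpace.OpenNhdsOf t))
  have hF : (F : Filter (TopologicalSpace.OpenNhdsOf t)) ≤ Filter.atBot := Ultrafilter.of_le _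
  have hmem : ∀ U, toWeakSpace ℝ C(S, ℝ) (T (f U)) ∈
      closure ((toWeakSpace ℝ C(S, ℝ)) '' (T '' Metric.closedBall 0 1)) := by
    intro U
    refine subset_closure ⟨_, ⟨f U, ?_, rfl⟩, rfl⟩
    rw [mem_closedBall_zero_iff, ContinuousMap.norm_le _ zero_le_one]
    intro x
    rw [Real.norm_eq_abs, abs_of_nonneg (h01 U x).1]
    exact (h01 U x).2
  obtain ⟨g, -, hg⟩ := hT.ultrafilter_le_nhds
    (F.map fun U => toWeakSpace ℝ C(S, ℝ) (T (f U)))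
    (Filter.le_principal_iff.2 (Filter.mem_map.2 (Filter.univ_mem' hmem)))
  have hg' : Filter.Tendsto (fun U => toWeakSpace ℝ C(S, ℝ) (T (f U))) F (𝓝 g) := hg
  have key : (fun s => μ s {t}) = ((toWeakSpace ℝ C(S, ℝ)).symm g : C(S, ℝ)) := by
    funext s
    -- Point evaluation is a bounded functional, hence weakly continuous.
    have hc : Continuous fun x : WeakSpace ℝ C(S, ℝ) =>
        ContinuousMap.evalCLM ℝ s ((toWeakSpace ℝ C(S, ℝ)).symm x) :=
      WeakBilin.eval_continuous (topDualPairing ℝ C(S, ℝ)).flip (ContinuousMap.evalCLM ℝ s)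
    exact tendsto_nhds_unique ((hlim s).mono_left hF) ((hc.tendsto g).comp hg')
  rw [key]
  exact ContinuousMap.continuous _
end

section
/- Let S be a separable compact Hausdorff space without isolated points and let T : C(S) → C(S) be a bounded linear operator with representing kernel (μ_s)_{s∈S} such that for every t ∈ S the function s ↦ μ_s({t}) is continuous on S. Then the set { t ∈ S : μ_s({t}) = 0 for all s ∈ S } is dense in S. -/
/-!
The points `t` with `μ s {t} ≠ 0` for some `s` form a countable set. Indeed, by continuity of
`s ↦ μ s {t}` such an `s` can be found in a fixed countable dense set, and each finite signed
measure `μ s` has only countably many atoms. Complements of points are open, and dense because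
there are no isolated points, so by the Baire category theorem (compact Hausdorff spaces are Baire)
the complement of a countable set is dense.
-/

open MeasureTheory Topology

theorem countable_atoms_signedMeasure {S : Type*} [MeasurableSpace S]
    [MeasurableSingletonClass S] (ν : SignedMeasure S) : {t : S | ν {t} ≠ 0}.Countable := by
  have h : {t : S | 0 < ν.totalVariation {t}}.Countable :=
    Measure.countable_meas_pos_of_disjoint_iUnion (μ := ν.totalVariation)
      (fun t => measurableSet_singleton t)
      (fun a b hab => Set.disjoint_singleton.2 hab)
  refine h.mono fun t ht => ?_
  rw [Set.mem_ofPred_eq, pos_iff_ne_zero]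
  intro h0
  exact ht (ν.null_of_totalVariation_zero h0)

theorem dense_compl_of_countable_of_perfect {S : Type*} [TopologicalSpace S] [BaireSpace S]
    [T1Space S] [PerfectSpace S] {A : Set S} (hA : A.Countable) : Dense Aᶜ := by
  have h : Dense (⋂ t ∈ A, ({t}ᶜ : Set S)) :=
    dense_biInter_of_isOpen (fun t _ => isOpen_compl_singleton) hA
      (fun t _ => dense_compl_singleton t)
  convert h using 1
  ext x
  simp only [Set.mem_compl_iff, Set.mem_iInter, Set.mem_singleton_iff]
  exact ⟨fun hx t ht e => hx (e ▸ ht), fun hx hxA => hx x hxA rfl⟩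

theorem dense_null_atoms_of_separable {S : Type*} [TopologicalSpace S] [CompactSpace S]
    [T2Space S] [PerfectSpace S] [TopologicalSpace.SeparableSpace S]
    [MeasurableSpace S] [BorelSpace S]
    (T : C(S, ℝ) →L[ℝ] C(S, ℝ)) (μ : S → SignedMeasure S)
    (hreg : ∀ s, (μ s).totalVariation.Regular)
    (hker : ∀ (f : C(S, ℝ)) (s : S), T f s = SignedMeasure.integral (μ s) f)
    (hcont : ∀ t : S, Continuous fun s => μ s {t}) :
    Dense {t : S | ∀ s : S, μ s {t} = 0} := by
  obtain ⟨D, hDc, hDd⟩ := TopologicalSpace.exists_countable_dense S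
  have hA : (⋃ s ∈ D, {t : S | μ s {t} ≠ 0}).Countable :=
    hDc.biUnion fun s _ => countable_atoms_signedMeasure (μ s)
  refine (dense_compl_of_countable_of_perfect hA).mono fun t ht s => ?_
  have hD : Set.EqOn (fun s => μ s {t}) (fun _ => 0) D := fun s hs => by
    by_contra h
    exact ht (Set.mem_biUnion hs h)
  exact congrFun ((hcont t).ext_on hDd continuous_const hD) s
end
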